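/- Let A = ℂ[x₁₁, x₁₂, …, x₄₄] be the polynomial ring in the sixteen variables x_{ij} (1 ≤ i,j ≤ 4), and let J be the ideal generated by x₁₁, x₁₂, x₁₃, x₄₁, x₄₂, x₄₃, x₄₄ together with x₂₂ + x₃₃, x₁₄x₂₁ + x₂₃x₃₄ − x₂₄x₃₃, x₁₄x₃₁ + x₂₄x₃₂ + x₃₃x₃₄, x₂₃x₃₂ + x₃₃², x₂₁x₃₂ + x₃₁x₃₃, and x₂₁x₃₃ − x₂₃x₃₁. Then the Krull dimension of the quotient ring A/J is 5. -/

import Mathlib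

open MvPolynomial

/-!
The Krull dimension of a finitely generated algebra over a field is controlled by transcendence
degrees: it is at most `n` if every quotient domain has transcendence degree at most `n`, and at
least the transcendence degree of any domain algebraic over the image of the algebra.

Points of `J` are the matrices whose only possibly nonzero entries are `a`, `v`, `N`, `w` in the
block shape `[0 0 a; v N w; 0 0 0]`, subject to `tr N = 0`, `N² = 0`, `N v = 0` and `N w = -a v`.
If `x₂₃ ≠ 0`, the whole matrix is algebraic over `x₁₄, x₂₁, x₂₃, x₂₄, x₃₃`; if `x₂₃ = 0`, then
`x₂₂ = x₃₃ = 0`, and `x₂₁ x₃₂ = 0` leaves at most five nonzero entries. Conversely, if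
`b = x₂₃` is invertible, then `N = b u (-τ, 1)` with `u = (1, τ)ᵀ`, which forces `v = p u`;
replacing `a` by `b a` makes `w` polynomial too, and the resulting family has five independent
parameters.
-/

section KrullDimension

theorem ringKrullDim_eq_of_isIntegral (R S : Type*) [CommRing R] [CommRing S] [Algebra R S]
    [Algebra.IsIntegral R S] [FaithfulSMul R S] : ringKrullDim S = ringKrullDim R := by
  refine le_antisymm (Order.krullDim_le_of_strictMono (PrimeSpectrum.comap (algebraMap R S))
    fun _ _ h ↦ Ideal.IsIntegral.comap_lt_comap h) (iSup_le fun l ↦ ?_)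
  obtain ⟨⟨P, _, _⟩⟩ := l.head.asIdeal.nonempty_primesOver (S := S)
  obtain ⟨L, hL, -⟩ := Ideal.exists_ltSeries_of_hasGoingUp l P
  exact hL ▸ le_iSup_of_le L le_rfl

theorem ringKrullDim_eq_trdeg (k D : Type*) [Field k] [CommRing D] [IsDomain D] [Algebra k D]
    [Algebra.FiniteType k D] : ringKrullDim D = (Algebra.trdeg k D).toENat := by
  obtain ⟨s, g, g_injective, g_integral⟩ := exists_integral_inj_algHom_of_fg k D
  algebraize [g.toRingHom]
  have : IsScalarTower k (MvPolynomial (Fin s) k) D := .of_algHom g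
  have : FaithfulSMul (MvPolynomial (Fin s) k) D :=
    (faithfulSMul_iff_algebraMap_injective _ _).mpr g_injective
  have trdeg_eq := (IsTranscendenceBasis.mvPolynomial (Fin s) k).algebraMap_comp (A := D)
    |>.lift_cardinalMk_eq_trdeg
  rw [ringKrullDim_eq_of_isIntegral (MvPolynomial (Fin s) k) D,
    MvPolynomial.ringKrullDim_of_isNoetherianRing, ringKrullDim_eq_zero_of_field]
  simp only [Cardinal.mk_fin, Cardinal.lift_natCast, Cardinal.lift_uzero] at trdeg_eq
  simp only [← trdeg_eq, Nat.card_fin, map_natCast, zero_add]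
  rfl

theorem ringKrullDim_le_of_forall_quotient_le {R : Type*} [CommRing R] {n : WithBot ℕ∞}
    (h : ∀ P : Ideal R, P.IsPrime → ringKrullDim (R ⧸ P) ≤ n) : ringKrullDim R ≤ n := by
  rw [ringKrullDim, Order.krullDim_eq_iSup_coheight]
  refine iSup_le fun P ↦ ?_
  rw [Order.coheight_eq_krullDim_Ici]
  exact ringKrullDim_quotient P.asIdeal ▸ h P.asIdeal P.2

theorem isAlgebraic_of_adjoin_eq_top {k D : Type*} [CommRing k] [CommRing D] [IsDomain D]
    [Algebra k D] {K : Subalgebra k D} {t : Set D} (ht : Algebra.adjoin k t = ⊤)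
    (h : ∀ x ∈ t, IsAlgebraic K x) : Algebra.IsAlgebraic K D where
  isAlgebraic _ :=
    Algebra.adjoin_le (S := (Subalgebra.algebraicClosure K D).restrictScalars k) h
      (ht ▸ Algebra.mem_top)

theorem trdeg_le_ringKrullDim_of_isAlgebraic_range {k A D : Type*} [Field k] [CommRing A]
    [CommRing D] [IsDomain D] [Algebra k A] [Algebra.FiniteType k A] [Algebra k D]
    (f : A →ₐ[k] D) [Algebra.IsAlgebraic f.range D] :
    (Algebra.trdeg k D).toENat ≤ ringKrullDim A := by
  have : Algebra.FiniteType k f.range := .of_surjective f.rangeRestrict f.rangeRestrict_surjective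
  have trdeg_eq : Algebra.trdeg k f.range = Algebra.trdeg k D := by
    rw [← trdeg_add_eq k f.range (A := D), trdeg_eq_zero (R := f.range), add_zero]
  rw [← trdeg_eq, ← ringKrullDim_eq_trdeg k f.range]
  exact ringKrullDim_le_of_surjective f.rangeRestrict.toRingHom f.rangeRestrict_surjective

end KrullDimension

section RotaBaxter

/-- The ideal `J` of compatible square-zero Rota-Baxter operators of weight 0 on `L₁,₂`, over an
arbitrary ring of coefficients; the entry `xᵢⱼ` is the variable `X (i - 1, j - 1)`. -/
noncomputable def rotaBaxterIdeal (R : Type*) [CommRing R] :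
    Ideal (MvPolynomial (Fin 4 × Fin 4) R) :=
  Ideal.span {(X (0, 0) : MvPolynomial (Fin 4 × Fin 4) R), X (0, 1), X (0, 2),
    X (3, 0), X (3, 1), X (3, 2), X (3, 3),
    X (1, 1) + X (2, 2),
    X (0, 3) * X (1, 0) + X (1, 2) * X (2, 3) - X (1, 3) * X (2, 2),
    X (0, 3) * X (2, 0) + X (1, 3) * X (2, 1) + X (2, 2) * X (2, 3),
    X (1, 2) * X (2, 1) + X (2, 2) ^ 2,
    X (1, 0) * X (2, 1) + X (2, 0) * X (2, 2),
    X (1, 0) * X (2, 2) - X (1, 2) * X (2, 0)}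

/-- The matrices of compatible square-zero Rota-Baxter operators of weight 0 on `L₁,₂`, that is,
the points of `rotaBaxterIdeal` (see `rotaBaxterIdeal_le_ker_iff`). -/
structure IsRotaBaxterMatrix {S : Type*} [CommRing S] (M : Matrix (Fin 4) (Fin 4) S) : Prop where
  row_zero : ∀ j ≠ 3, M 0 j = 0
  row_three : ∀ j, M 3 j = 0
  trace_eq_zero : M.trace = 0
  sq_eq_zero : M ^ 2 = 0

theorem isRotaBaxterMatrix_iff {S : Type*} [CommRing S] {M : Matrix (Fin 4) (Fin 4) S} :
    IsRotaBaxterMatrix M ↔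
      (∀ j ≠ 3, M 0 j = 0) ∧ (∀ j, M 3 j = 0) ∧ M 1 1 + M 2 2 = 0 ∧
      M 0 3 * M 1 0 + M 1 2 * M 2 3 - M 1 3 * M 2 2 = 0 ∧
      M 0 3 * M 2 0 + M 1 3 * M 2 1 + M 2 2 * M 2 3 = 0 ∧
      M 1 2 * M 2 1 + M 2 2 ^ 2 = 0 ∧
      M 1 0 * M 2 1 + M 2 0 * M 2 2 = 0 ∧
      M 1 0 * M 2 2 - M 1 2 * M 2 0 = 0 := by
  have sq_apply (i j : Fin 4) :
      (M ^ 2) i j = M i 0 * M 0 j + M i 1 * M 1 j + M i 2 * M 2 j + M i 3 * M 3 j := by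
    rw [sq, Matrix.mul_apply, Fin.sum_univ_four]
  have trace_eq : M.trace = M 0 0 + M 1 1 + M 2 2 + M 3 3 := Fin.sum_univ_four _
  have row_zero_eq (h : ∀ j ≠ 3, M 0 j = 0) : M 0 0 = 0 ∧ M 0 1 = 0 ∧ M 0 2 = 0 :=
    ⟨h 0 (by decide), h 1 (by decide), h 2 (by decide)⟩
  constructor
  · rintro ⟨row_zero, row_three, trace_eq_zero, sq_eq_zero⟩
    have hsq (i j : Fin 4) := (sq_apply i j).symm.trans (congr_fun₂ sq_eq_zero i j)
    obtain ⟨h00, -, h02⟩ := row_zero_eq row_zero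
    rw [trace_eq, h00, row_three, zero_add, add_zero] at trace_eq_zero
    simp only [row_three, Matrix.zero_apply] at hsq
    refine ⟨row_zero, row_three, trace_eq_zero, ?_, ?_, ?_, ?_, ?_⟩
    · linear_combination hsq 1 3 - M 1 3 * trace_eq_zero
    · linear_combination hsq 2 3
    · linear_combination hsq 2 2 - M 2 0 * h02
    · linear_combination hsq 2 0 - M 2 0 * h00
    · linear_combination -hsq 1 0 + M 1 0 * h00 + M 1 0 * trace_eq_zero
  · rintro ⟨row_zero, row_three, h11, e₁, e₂, e₃, e₄, e₅⟩
    obtain ⟨h00, h01, h02⟩ := row_zero_eq row_zero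
    refine ⟨row_zero, row_three, ?_, ?_⟩
    · rw [trace_eq, h00, row_three, zero_add, add_zero, h11]
    · ext i j
      rw [sq_apply, Matrix.zero_apply]
      fin_cases i <;> fin_cases j <;> grind

theorem rotaBaxterIdeal_le_ker_iff {R S : Type*} [CommRing R] [CommRing S] [Algebra R S]
    (f : MvPolynomial (Fin 4 × Fin 4) R →ₐ[R] S) :
    rotaBaxterIdeal R ≤ RingHom.ker f ↔
      IsRotaBaxterMatrix (Matrix.of fun i j ↦ f (X (i, j))) := by
  simp [isRotaBaxterMatrix_iff, rotaBaxterIdeal, Ideal.span_le, Set.insert_subset_iff,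
    RingHom.mem_ker, Fin.forall_fin_succ, and_assoc]

theorem IsRotaBaxterMatrix.isAlgebraic_apply {R S : Type*} [CommRing R] [Nontrivial R] [CommRing S]
    [Algebra R S] {M : Matrix (Fin 4) (Fin 4) S} (hM : IsRotaBaxterMatrix M)
    (h03 : IsAlgebraic R (M 0 3)) (h10 : IsAlgebraic R (M 1 0)) (h12 : IsAlgebraic R (M 1 2))
    (h13 : IsAlgebraic R (M 1 3)) (h20 : IsAlgebraic R (M 2 0)) (h21 : IsAlgebraic R (M 2 1))
    (h22 : IsAlgebraic R (M 2 2)) (h23 : IsAlgebraic R (M 2 3)) (i j : Fin 4) :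
    IsAlgebraic R (M i j) := by
  obtain ⟨row_zero, row_three, h11, -⟩ := isRotaBaxterMatrix_iff.mp hM
  have a11 : IsAlgebraic R (M 1 1) := by
    rw [eq_neg_of_add_eq_zero_left h11]
    exact h22.neg
  have a0 (j : Fin 4) (hj : j ≠ 3) : IsAlgebraic R (M 0 j) := by
    rw [row_zero j hj]
    exact isAlgebraic_zero
  have a3 (j : Fin 4) : IsAlgebraic R (M 3 j) := by
    rw [row_three]
    exact isAlgebraic_zero
  fin_cases i <;> fin_cases j <;> first | assumption | exact a3 _ | exact a0 _ (by decide)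

theorem IsRotaBaxterMatrix.exists_finset_forall_isAlgebraic (k : Type*) {D : Type*} [CommRing k]
    [CommRing D] [IsDomain D] [Algebra k D] {M : Matrix (Fin 4) (Fin 4) D}
    (hM : IsRotaBaxterMatrix M) :
    ∃ s : Finset D, s.card ≤ 5 ∧
      ∀ i j, IsAlgebraic (Algebra.adjoin k (s : Set D)) (M i j) := by
  classical
  have of_mem {s : Finset D} {x : D} (hx : x ∈ s) :
      IsAlgebraic (Algebra.adjoin k (s : Set D)) x :=
    isAlgebraic_algebraMap (⟨x, Algebra.subset_adjoin hx⟩ : Algebra.adjoin k (s : Set D))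
  obtain ⟨-, -, -, e₁, -, e₃, e₄, e₅⟩ := isRotaBaxterMatrix_iff.mp hM
  by_cases h12 : M 1 2 = 0
  · have h22 : M 2 2 = 0 := by simpa [h12] using e₃
    have : M 1 0 = 0 ∨ M 2 1 = 0 := by simpa [h22] using e₄
    rcases this with h10 | h21
    · refine ⟨{M 0 3, M 1 3, M 2 0, M 2 1, M 2 3}, Finset.card_le_five, ?_⟩
      apply hM.isAlgebraic_apply <;>
        first | simp only [h10, h12, h22, isAlgebraic_zero] | exact of_mem (by simp)
    · refine ⟨{M 0 3, M 1 0, M 1 3, M 2 0, M 2 3}, Finset.card_le_five, ?_⟩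
      apply hM.isAlgebraic_apply <;>
        first | simp only [h12, h21, h22, isAlgebraic_zero] | exact of_mem (by simp)
  · let s : Finset D := {M 0 3, M 1 0, M 1 2, M 1 3, M 2 2}
    have a03 : IsAlgebraic (Algebra.adjoin k (s : Set D)) (M 0 3) := of_mem (by simp [s])
    have a10 : IsAlgebraic (Algebra.adjoin k (s : Set D)) (M 1 0) := of_mem (by simp [s])
    have a12 : IsAlgebraic (Algebra.adjoin k (s : Set D)) (M 1 2) := of_mem (by simp [s])
    have a13 : IsAlgebraic (Algebra.adjoin k (s : Set D)) (M 1 3) := of_mem (by simp [s])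
    have a22 : IsAlgebraic (Algebra.adjoin k (s : Set D)) (M 2 2) := of_mem (by simp [s])
    have of_mul {x : D} (hx : IsAlgebraic (Algebra.adjoin k (s : Set D)) (M 1 2 * x)) :
        IsAlgebraic (Algebra.adjoin k (s : Set D)) x :=
      .of_mul (mem_nonZeroDivisors_of_ne_zero h12) a12 hx
    refine ⟨s, Finset.card_le_five, hM.isAlgebraic_apply a03 a10 a12 a13 (of_mul ?_) (of_mul ?_)
      a22 (of_mul ?_)⟩
    · rw [← sub_eq_zero.mp e₅]
      exact a10.mul a22
    · rw [eq_neg_of_add_eq_zero_left e₃]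
      exact (a22.pow 2).neg
    · rw [show M 1 2 * M 2 3 = M 1 3 * M 2 2 - M 0 3 * M 1 0 by linear_combination e₁]
      exact (a13.mul a22).sub (a03.mul a10)

theorem trdeg_le_five_of_rotaBaxterIdeal_le_ker {k D : Type*} [CommRing k] [CommRing D]
    [IsDomain D] [Algebra k D] {f : MvPolynomial (Fin 4 × Fin 4) k →ₐ[k] D}
    (hf : Function.Surjective f) (hJ : rotaBaxterIdeal k ≤ RingHom.ker f) :
    Algebra.trdeg k D ≤ 5 := by
  obtain ⟨s, s_card, hs⟩ :=
    ((rotaBaxterIdeal_le_ker_iff f).mp hJ).exists_finset_forall_isAlgebraic k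
  have adjoin_eq_top : Algebra.adjoin k (Set.range (f ∘ X)) = ⊤ := by
    rw [Set.range_comp, ← AlgHom.map_adjoin, adjoin_range_X, Algebra.map_top,
      (AlgHom.range_eq_top f).mpr hf]
  have : Algebra.IsAlgebraic (Algebra.adjoin k (s : Set D)) D :=
    isAlgebraic_of_adjoin_eq_top adjoin_eq_top (by rintro _ ⟨⟨i, j⟩, rfl⟩; exact hs i j)
  calc Algebra.trdeg k D ≤ s.card := by
        simpa using Algebra.IsAlgebraic.trdeg_le_cardinalMk k (s : Set D)
    _ ≤ 5 := by exact_mod_cast s_card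

theorem ringKrullDim_quotient_rotaBaxterIdeal_le (k : Type*) [Field k] :
    ringKrullDim (MvPolynomial (Fin 4 × Fin 4) k ⧸ rotaBaxterIdeal k) ≤ 5 := by
  refine ringKrullDim_le_of_forall_quotient_le fun P _ ↦ ?_
  rw [ringKrullDim_eq_trdeg k]
  let f := (Ideal.Quotient.mkₐ k P).comp (Ideal.Quotient.mkₐ k (rotaBaxterIdeal k))
  have f_surjective : Function.Surjective f :=
    (Ideal.Quotient.mkₐ_surjective k P).comp (Ideal.Quotient.mkₐ_surjective k _)
  have hJ : rotaBaxterIdeal k ≤ RingHom.ker f := fun x hx ↦ by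
    simp [f, RingHom.mem_ker, Ideal.Quotient.eq_zero_iff_mem.mpr hx]
  exact WithBot.coe_le_coe.mpr (Cardinal.toENat_le_ofNat.mpr
    (trdeg_le_five_of_rotaBaxterIdeal_le_ker f_surjective hJ))

/-- A five-parameter family of square-zero Rota-Baxter matrices, in which `x₂₁ = p`, `x₂₃ = b`,
`x₂₄ = c`, and `τ` is the ratio of the third row to the second outside the last
column. -/
def rotaBaxterFamily {S : Type*} [CommRing S] (a p b c τ : S) : Matrix (Fin 4) (Fin 4) S :=
  !![0, 0, 0, b * a;
     p, -(b * τ), b, c;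
     τ * p, -(b * τ ^ 2), b * τ, τ * c - a * p;
     0, 0, 0, 0]

theorem isRotaBaxterMatrix_rotaBaxterFamily {S : Type*} [CommRing S] (a p b c τ : S) :
    IsRotaBaxterMatrix (rotaBaxterFamily a p b c τ) := by
  refine isRotaBaxterMatrix_iff.mpr ⟨?_, ?_, ?_, ?_, ?_, ?_, ?_, ?_⟩ <;>
    simp [rotaBaxterFamily, Fin.forall_fin_succ] <;> ring

theorem five_le_ringKrullDim_quotient_rotaBaxterIdeal (k : Type*) [Field k] :
    5 ≤ ringKrullDim (MvPolynomial (Fin 4 × Fin 4) k ⧸ rotaBaxterIdeal k) := by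
  let M := rotaBaxterFamily (S := MvPolynomial (Fin 5) k) (X 0) (X 1) (X 2) (X 3) (X 4)
  let f : MvPolynomial (Fin 4 × Fin 4) k →ₐ[k] MvPolynomial (Fin 5) k := aeval fun i ↦ M i.1 i.2
  have f_X (i j : Fin 4) : f (X (i, j)) = M i j := aeval_X _ _
  have hJ : rotaBaxterIdeal k ≤ RingHom.ker f := by
    rw [rotaBaxterIdeal_le_ker_iff]
    simpa only [f_X] using! isRotaBaxterMatrix_rotaBaxterFamily _ _ _ _ _
  let g := Ideal.Quotient.liftₐ (rotaBaxterIdeal k) f fun x hx ↦ hJ hx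
  have entry (i j : Fin 4) : IsAlgebraic g.range (M i j) :=
    isAlgebraic_algebraMap (⟨M i j, Ideal.Quotient.mk _ (X (i, j)), f_X i j⟩ : g.range)
  have of_mul {y : MvPolynomial (Fin 5) k} (hy : IsAlgebraic g.range (X 2 * y)) :
      IsAlgebraic g.range y :=
    .of_mul (mem_nonZeroDivisors_of_ne_zero (X_ne_zero 2)) (entry 1 2) hy
  have : Algebra.IsAlgebraic g.range (MvPolynomial (Fin 5) k) := by
    refine isAlgebraic_of_adjoin_eq_top adjoin_range_X (Set.forall_mem_range.mpr fun i ↦ ?_)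
    fin_cases i
    exacts [of_mul (entry 0 3), entry 1 0, entry 1 2, entry 1 3, of_mul (entry 2 2)]
  simpa using trdeg_le_ringKrullDim_of_isAlgebraic_range g

end RotaBaxter

theorem krull_dimension_five_general (k : Type*) [Field k] :
    ringKrullDim (MvPolynomial (Fin 4 × Fin 4) k ⧸ rotaBaxterIdeal k) = 5 :=
  le_antisymm (ringKrullDim_quotient_rotaBaxterIdeal_le k)
    (five_le_ringKrullDim_quotient_rotaBaxterIdeal k)

/-- In `A = ℂ[x₁₁, …, x₄₄]` (variable `xᵢⱼ` is `X (i-1, j-1)`), the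
quotient of `A` by the vanishing ideal `J` of the variety of compatible square-zero
Rota-Baxter operators of weight 0 on `L₁,₂` has Krull dimension 5. -/
theorem krull_dimension_five :
    ringKrullDim (MvPolynomial (Fin 4 × Fin 4) ℂ ⧸
      (Ideal.span {(X (0, 0) : MvPolynomial (Fin 4 × Fin 4) ℂ), X (0, 1), X (0, 2),
        X (3, 0), X (3, 1), X (3, 2), X (3, 3),
        X (1, 1) + X (2, 2),
        X (0, 3) * X (1, 0) + X (1, 2) * X (2, 3) - X (1, 3) * X (2, 2),
        X (0, 3) * X (2, 0) + X (1, 3) * X (2, 1) + X (2, 2) * X (2, 3),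
        X (1, 2) * X (2, 1) + X (2, 2) ^ 2,
        X (1, 0) * X (2, 1) + X (2, 0) * X (2, 2),
        X (1, 0) * X (2, 2) - X (1, 2) * X (2, 0)})) = 5 := by
  exact krull_dimension_five_general ℂ
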